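/- Let μ be a probability measure on a measurable space Ω and Q : Ω → ℝ a measurable function, and let ε ∈ (0,1). For N ∈ ℕ with N ≥ 1, define for a sample vector (w₁,…,w_N) ∈ Ω^N the empirical maximum Q̂_N = max_{1 ≤ i ≤ N} Q(wᵢ). Then the N-fold product measure of the set of sample vectors for which μ{w ∈ Ω : Q(w) > Q̂_N} > ε is at most (1−ε)^N. -/

import Mathlib

open MeasureTheory

/-!
If the tail beyond the empirical maximum has mass more than `ε`, then so has the tail beyond every
single sample. The points whose upper tail has mass more than `ε` form a lower set, which is a
countable increasing union of rays of mass at most `1 - ε`, hence has mass at most `1 - ε` itself.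
By independence, all `N` samples fall into it with probability at most `(1 - ε) ^ N`.
-/

open Set
open scoped ENNReal Function

section UpperTail

variable {α : Type*} [LinearOrder α] [TopologicalSpace α] [SecondCountableTopology α]
  [MeasurableSpace α]

theorem measure_eq_iSup_Iic_of_isLowerSet [ClosedIciTopology α] (ν : Measure α) {s : Set α}
    (hs : IsLowerSet s) : ν s = ⨆ t ∈ s, ν (Iic t) := by
  refine le_antisymm ?_ (iSup₂_le fun t ht => measure_mono (hs.Iic_subset ht))
  by_cases hmax : ∃ t, IsGreatest s t
  · obtain ⟨t, ht, hle⟩ := hmax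
    calc
      ν s ≤ ν (Iic t) := measure_mono hle
      _ ≤ ⨆ t ∈ s, ν (Iic t) := le_iSup₂_of_le t ht le_rfl
  · -- Without a greatest element, `s` is covered by open rays, so second countability applies.
    have hcover : s ⊆ ⋃ t ∈ s, Iio t := fun u hu => by
      obtain ⟨t, ht, hut⟩ : ∃ t ∈ s, u < t := by
        by_contra! hle
        exact hmax ⟨u, hu, hle⟩
      exact mem_biUnion ht hut
    obtain ⟨T, hTs, hT, hunion⟩ :=
      TopologicalSpace.isOpen_biUnion_countable s Iio fun _ _ => isOpen_Iio
    have hdirected : DirectedOn ((· ⊆ ·) on Iio) T := fun a ha b hb =>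
      (le_total a b).elim (fun h => ⟨b, hb, Iio_subset_Iio h, Subset.rfl⟩)
        fun h => ⟨a, ha, Subset.rfl, Iio_subset_Iio h⟩
    calc
      ν s ≤ ν (⋃ t ∈ T, Iio t) := measure_mono (hcover.trans_eq hunion.symm)
      _ = ⨆ t ∈ T, ν (Iio t) := measure_biUnion_eq_iSup hT hdirected
      _ ≤ ⨆ t ∈ T, ν (Iic t) := iSup₂_mono fun _ _ => measure_mono Iio_subset_Iic_self
      _ ≤ ⨆ t ∈ s, ν (Iic t) := biSup_mono hTs

variable [OrderClosedTopology α] [OpensMeasurableSpace α]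

theorem measure_setOf_lt_measure_Ioi_le (ν : Measure α) (ε : ℝ≥0∞) :
    ν {t | ε < ν (Ioi t)} ≤ ν univ - ε := by
  have hlower : IsLowerSet {t | ε < ν (Ioi t)} := fun _ _ hle ht =>
    lt_of_lt_of_le ht (measure_mono (Ioi_subset_Ioi hle))
  rw [measure_eq_iSup_Iic_of_isLowerSet ν hlower]
  refine iSup₂_le fun t ht => ENNReal.le_sub_of_add_le_right ht.ne_top ?_
  calc
    ν (Iic t) + ε ≤ ν (Iic t) + ν (Ioi t) := by gcongr; exact ht.le
    _ = ν univ := by rw [← compl_Iic, measure_add_measure_compl measurableSet_Iic]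

variable {Ω : Type*} [MeasurableSpace Ω] {μ : Measure Ω} {Q : Ω → α}

theorem measure_setOf_lt_measure_setOf_lt_le (hQ : AEMeasurable Q μ) (ε : ℝ≥0∞) :
    μ {w | ε < μ {v | Q w < Q v}} ≤ μ univ - ε := by
  have htail (t : α) : μ.map Q (Ioi t) = μ {v | t < Q v} :=
    Measure.map_apply_of_aemeasurable hQ measurableSet_Ioi
  calc
    μ {w | ε < μ {v | Q w < Q v}} = μ (Q ⁻¹' {t | ε < μ.map Q (Ioi t)}) := by
      simp only [htail, preimage_ofPred_eq]
    _ ≤ μ.map Q {t | ε < μ.map Q (Ioi t)} := Measure.le_map_apply hQ _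
    _ ≤ μ.map Q univ - ε := measure_setOf_lt_measure_Ioi_le _ ε
    _ = μ univ - ε := by rw [Measure.map_apply_of_aemeasurable hQ .univ, preimage_univ]

theorem scenario_bad_set_le_general {ι : Type*} [Fintype ι] [SigmaFinite μ]
    (hQ : AEMeasurable Q μ) {M : (ι → Ω) → α} (hM : ∀ f i, Q (f i) ≤ M f) (ε : ℝ≥0∞) :
    Measure.pi (fun _ : ι => μ) {f | ε < μ {w | M f < Q w}} ≤ (μ univ - ε) ^ Fintype.card ι := by
  have hsub : {f | ε < μ {w | M f < Q w}} ⊆ univ.pi fun _ => {w | ε < μ {v | Q w < Q v}} :=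
    fun f hf i _ => lt_of_lt_of_le hf (measure_mono fun _ hv => (hM f i).trans_lt hv)
  calc
    Measure.pi (fun _ : ι => μ) {f | ε < μ {w | M f < Q w}}
      ≤ Measure.pi (fun _ : ι => μ) (univ.pi fun _ => {w | ε < μ {v | Q w < Q v}}) :=
        measure_mono hsub
    _ = μ {w | ε < μ {v | Q w < Q v}} ^ Fintype.card ι := by
        rw [Measure.pi_pi, Finset.prod_const, Finset.card_univ]
    _ ≤ (μ univ - ε) ^ Fintype.card ι := by
        gcongr
        exact measure_setOf_lt_measure_setOf_lt_le hQ ε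

end UpperTail

/-- For `N ≥ 1` i.i.d. samples with empirical maximum
`Q̂_N = max_{1 ≤ i ≤ N} Q(wᵢ) = ⨆ i, Q (f i)`, the product-measure probability
of the set of sample vectors for which `μ{Q > Q̂_N} > ε` is at most
`(1 - ε)^N`. -/
theorem scenario_bad_set_le {Ω : Type*} [MeasurableSpace Ω] (μ : Measure Ω)
    [IsProbabilityMeasure μ] (Q : Ω → ℝ) (hQ : Measurable Q)
    (ε : ℝ) (hε : ε ∈ Set.Ioo (0 : ℝ) 1) (N : ℕ) (hN : 1 ≤ N) :
    (Measure.pi fun _ : Fin N => μ)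
        {f : Fin N → Ω | μ {w : Ω | Q w > ⨆ i, Q (f i)} > ENNReal.ofReal ε}
      ≤ ENNReal.ofReal ((1 - ε) ^ N) := by
  have hle (f : Fin N → Ω) (i : Fin N) : Q (f i) ≤ ⨆ j, Q (f j) :=
    le_ciSup (finite_range fun j => Q (f j)).bddAbove i
  simpa [ENNReal.ofReal_pow (sub_nonneg.2 hε.2.le), ENNReal.ofReal_sub 1 hε.1.le]
    using scenario_bad_set_le_general (μ := μ) hQ.aemeasurable hle (ENNReal.ofReal ε)
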